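/- Let n ≥ 1, s ∈ ℝ and 0 < q, r ≤ ∞ satisfy either s/n + 1/q > 0 or (s/n + 1/q = 0 and r = ∞). Then the following are equivalent: (a) for every measurable f on ℝⁿ with ‖f‖_{K̇^s_{q,r}} < ∞ and every ε > 0 there exists g ∈ C_c^∞(ℝⁿ) with ‖f − g‖_{K̇^s_{q,r}} < ε; (b) q < ∞ and r < ∞. In other words, C_c^∞(ℝⁿ) is dense in K̇^s_{q,r}(ℝⁿ) if and only if 0 < q, r < ∞. -/

import Mathlib

open MeasureTheory Set ENNReal Filter

noncomputable section

abbrev Euc (n : ℕ) : Type := EuclideanSpace ℝ (Fin n)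

def annulus (n : ℕ) (j : ℤ) : Set (Euc n) :=
  {x : Euc n | (2 : ℝ) ^ (j - 1) ≤ ‖x‖ ∧ ‖x‖ < (2 : ℝ) ^ j}

def herzNorm (n : ℕ) (s : ℝ) (q r : ℝ≥0∞) (f : Euc n → ℝ) : ℝ≥0∞ :=
  if r = ⊤ then
    ⨆ j : ℤ, ENNReal.ofReal ((2 : ℝ) ^ ((j : ℝ) * s)) *
      eLpNorm ((annulus n j).indicator f) q volume
  else
    (∑' j : ℤ, (ENNReal.ofReal ((2 : ℝ) ^ ((j : ℝ) * s)) *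
      eLpNorm ((annulus n j).indicator f) q volume) ^ r.toReal) ^ (1 / r.toReal)

def openAnn (n : ℕ) (j : ℤ) : Set (Euc n) :=
  {x : Euc n | (2 : ℝ) ^ (j - 1) < ‖x‖ ∧ ‖x‖ < (2 : ℝ) ^ j}

lemma isOpen_shell (n : ℕ) (a b : ℝ) : IsOpen {x : Euc n | a < ‖x‖ ∧ ‖x‖ < b} :=
  (isOpen_lt continuous_const continuous_norm).inter (isOpen_lt continuous_norm continuous_const)

lemma measurableSet_annulus (n : ℕ) (j : ℤ) : MeasurableSet (annulus n j) :=
  (measurableSet_le measurable_const measurable_norm).inter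
    (measurableSet_lt measurable_norm measurable_const)

lemma exists_norm_eq' (n : ℕ) (hn : 1 ≤ n) (a : ℝ) (ha : 0 ≤ a) : ∃ x : Euc n, ‖x‖ = a := by
  have : Nonempty (Fin n) := ⟨⟨0, hn⟩⟩
  have : Nontrivial (Euc n) := inferInstance
  exact exists_norm_eq (Euc n) ha

lemma openAnn_ae (n : ℕ) (hn : 1 ≤ n) (j : ℤ) :
    annulus n j =ᵐ[volume] openAnn n j := by
  have : Nonempty (Fin n) := ⟨⟨0, hn⟩⟩
  have h0 : (volume : Measure (Euc n)) (Metric.sphere 0 ((2 : ℝ) ^ (j - 1))) = 0 :=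
    Measure.addHaar_sphere _ _ _
  have h1 : ∀ᵐ x : Euc n, x ∉ Metric.sphere (0 : Euc n) ((2 : ℝ) ^ (j - 1)) :=
    measure_eq_zero_iff_ae_notMem.1 h0
  filter_upwards [h1] with x hx
  have hx' : ‖x‖ ≠ (2 : ℝ) ^ (j - 1) := by simpa using hx
  apply propext
  constructor
  · rintro ⟨h, h'⟩
    exact ⟨lt_of_le_of_ne h hx'.symm, h'⟩
  · rintro ⟨h, h'⟩
    exact ⟨h.le, h'⟩

lemma annulus_vol_lt_top (n : ℕ) (j : ℤ) : volume (annulus n j) < ⊤ := by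
  refine lt_of_le_of_lt (measure_mono (t := Metric.ball 0 ((2 : ℝ) ^ j)) ?_) measure_ball_lt_top
  rintro x ⟨_, h⟩
  simpa using h

lemma annulus_vol_pos (n : ℕ) (hn : 1 ≤ n) (j : ℤ) : 0 < volume (annulus n j) := by
  rw [measure_congr (openAnn_ae n hn j)]
  refine (isOpen_shell n _ _).measure_pos volume ?_
  have h : (2 : ℝ) ^ (j - 1) < 2 ^ j := zpow_lt_zpow_right₀ (by norm_num) (by lia)
  have h0 : (0 : ℝ) < (2 : ℝ) ^ (j - 1) := by positivity
  obtain ⟨x, hx⟩ := exists_norm_eq' n hn (((2 : ℝ) ^ (j - 1) + 2 ^ j) / 2) (by linarith)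
  exact ⟨x, by rw [hx]; linarith, by rw [hx]; linarith⟩

lemma approx_smooth (n : ℕ) (U : Set (Euc n)) (hU : IsOpen U) (p : ℝ≥0∞) (hp : p ≠ ⊤)
    (f : Euc n → ℝ) (hf : MemLp f p (volume.restrict U)) (ε : ℝ≥0∞) (hε : ε ≠ 0) :
    ∃ g : Euc n → ℝ, eLpNorm (f - g) p (volume.restrict U) ≤ ε ∧
      (ContDiff ℝ (⊤ : ℕ∞) g ∧ HasCompactSupport g ∧ Function.support g ⊆ U) := by
  refine MemLp.induction_dense hp
    (fun g => ContDiff ℝ (⊤ : ℕ∞) g ∧ HasCompactSupport g ∧ Function.support g ⊆ U)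
    ?_ ?_ ?_ hf hε
  · intro c s hs hμs ε hε
    obtain ⟨η, η_pos, hη⟩ := exists_eLpNorm_indicator_le (μ := volume.restrict U) hp c hε
    have hη2 : ((η : ℝ≥0∞) / 2) ≠ 0 := by simp [η_pos.ne']
    have ht : MeasurableSet (s ∩ U) := hs.inter hU.measurableSet
    have htf : volume (s ∩ U) ≠ ⊤ := by
      rw [Measure.restrict_apply hs] at hμs
      exact hμs.ne
    obtain ⟨K, hKt, hK, hKm⟩ := ht.exists_isCompact_sdiff_lt htf hη2
    obtain ⟨V, hKV, hV, _, hVm⟩ := hK.measurableSet.exists_isOpen_sdiff_lt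
      (hK.measure_lt_top (μ := volume)).ne hη2
    obtain ⟨L, hL, hKL, hLV⟩ := exists_compact_between hK (hU.inter hV)
      (subset_inter (hKt.trans inter_subset_right) hKV)
    obtain ⟨φ, φd, φr, φs, φ1⟩ := exists_contMDiff_support_eq_eq_one_iff
      (n := (⊤ : ℕ∞)) (modelWithCornersSelf ℝ (Euc n)) (isOpen_interior (s := L)) hK.isClosed hKL
    have φr' : ∀ x, 0 ≤ φ x ∧ φ x ≤ 1 := fun x => φr (mem_range_self x)
    have hsup : Function.support (fun x => φ x * c) ⊆ L := by
      intro x hx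
      have : x ∈ Function.support φ := by
        intro h
        simp [h] at hx
      rw [φs] at this
      exact interior_subset this
    refine ⟨fun x => φ x * c, ?_, φd.contDiff.mul contDiff_const,
      HasCompactSupport.of_support_subset_isCompact hL hsup,
      hsup.trans (hLV.trans inter_subset_left)⟩
    refine le_trans (eLpNorm_mono (g := ((V \ K) ∪ (s \ K)).indicator fun _ => c) ?_) (hη _ ?_)
    · intro x
      have hb : ‖φ x * c‖ ≤ ‖c‖ := by
        rw [norm_mul, Real.norm_eq_abs, abs_of_nonneg (φr' x).1]
        exact mul_le_of_le_one_left (norm_nonneg _) (φr' x).2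
      have hb2 : ‖φ x * c - c‖ ≤ ‖c‖ := by
        have : φ x * c - c = (φ x - 1) * c := by ring
        rw [this, norm_mul, Real.norm_eq_abs]
        refine mul_le_of_le_one_left (norm_nonneg _) ?_
        rw [abs_le]
        constructor <;> linarith [(φr' x).1, (φr' x).2]
      simp only [Pi.sub_apply]
      by_cases hxK : x ∈ K
      · have hxs : x ∈ s := (hKt hxK).1
        rw [(φ1 x).1 hxK, indicator_of_mem hxs]
        simp
      · by_cases hxs : x ∈ s
        · rw [indicator_of_mem hxs, indicator_of_mem (show x ∈ (V \ K) ∪ (s \ K) from Or.inr ⟨hxs, hxK⟩)]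
          exact hb2
        · rw [indicator_of_notMem hxs, sub_zero]
          by_cases hxV : x ∈ V
          · rw [indicator_of_mem (show x ∈ (V \ K) ∪ (s \ K) from Or.inl ⟨hxV, hxK⟩)]
            exact hb
          · have : φ x * c = 0 := by
              by_contra h
              exact hxV (hLV (hsup h)).2
            rw [this]
            simp
    · calc (volume.restrict U) ((V \ K) ∪ (s \ K))
          ≤ (volume.restrict U) (V \ K) + (volume.restrict U) (s \ K) := measure_union_le _ _
        _ ≤ η / 2 + η / 2 := by
            gcongr
            · exact (Measure.restrict_apply_le _ _).trans hVm.le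
            · rw [Measure.restrict_apply (hs.diff hK.measurableSet)]
              refine le_trans (measure_mono ?_) hKm.le
              rintro x ⟨⟨h1, h2⟩, h3⟩
              exact ⟨⟨h1, h3⟩, h2⟩
        _ = η := ENNReal.add_halves _
  · rintro f g ⟨h1, h2, h3⟩ ⟨k1, k2, k3⟩
    exact ⟨h1.add k1, h2.add k2, (Function.support_add f g).trans (union_subset h3 k3)⟩
  · rintro f ⟨h1, _, _⟩
    exact h1.continuous.aestronglyMeasurable

def wgt (s : ℝ) (j : ℤ) : ℝ≥0∞ := ENNReal.ofReal ((2 : ℝ) ^ ((j : ℝ) * s))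

lemma wgt_ne_zero (s : ℝ) (j : ℤ) : wgt s j ≠ 0 := by
  have : (0 : ℝ) < (2 : ℝ) ^ ((j : ℝ) * s) := by positivity
  simp [wgt, this]

lemma wgt_ne_top (s : ℝ) (j : ℤ) : wgt s j ≠ ⊤ := ENNReal.ofReal_ne_top

lemma term_le_herz (n : ℕ) (s : ℝ) (q r : ℝ≥0∞) (hr : 0 < r) (f : Euc n → ℝ) (j : ℤ) :
    wgt s j * eLpNorm ((annulus n j).indicator f) q volume ≤ herzNorm n s q r f := by
  unfold herzNorm
  split_ifs with h
  · exact le_iSup (fun j : ℤ => ENNReal.ofReal ((2 : ℝ) ^ ((j : ℝ) * s)) *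
      eLpNorm ((annulus n j).indicator f) q volume) j
  · have hr0 : 0 < r.toReal := ENNReal.toReal_pos hr.ne' h
    rw [one_div, ENNReal.le_rpow_inv_iff hr0]
    exact ENNReal.le_tsum (f := fun j : ℤ => (ENNReal.ofReal ((2 : ℝ) ^ ((j : ℝ) * s)) *
      eLpNorm ((annulus n j).indicator f) q volume) ^ r.toReal) j

lemma annulus_disj {n : ℕ} {i j : ℤ} {x : Euc n} (hi : x ∈ annulus n i) (hj : x ∈ annulus n j) :
    i = j := by
  have h1 : (2 : ℝ) ^ (i - 1) < 2 ^ j := hi.1.trans_lt hj.2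
  have h2 : (2 : ℝ) ^ (j - 1) < 2 ^ i := hj.1.trans_lt hi.2
  rw [zpow_lt_zpow_iff_right₀ (by norm_num)] at h1 h2
  lia

lemma dense_of_finite (n : ℕ) (hn : 1 ≤ n) (s : ℝ) (q r : ℝ≥0∞) (hr : 0 < r)
    (hq' : q < ⊤) (hr' : r < ⊤) (f : Euc n → ℝ) (hf : Measurable f)
    (hfin : herzNorm n s q r f < ⊤) (ε : ℝ) (hε : 0 < ε) :
    ∃ g : Euc n → ℝ, ContDiff ℝ (⊤ : ℕ∞) g ∧ HasCompactSupport g ∧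
          herzNorm n s q r (fun x => f x - g x) < ENNReal.ofReal ε := by
  have hr0 : 0 < r.toReal := ENNReal.toReal_pos hr.ne' hr'.ne
  set b : ℤ → ℝ≥0∞ := fun j =>
    (wgt s j * eLpNorm ((annulus n j).indicator f) q volume) ^ r.toReal with hb
  have hbsum : ∑' j, b j ≠ ⊤ := by
    intro h
    apply hfin.ne
    unfold herzNorm
    rw [if_neg hr'.ne]
    change (∑' j, b j) ^ (1 / r.toReal) = ⊤
    rw [h, ENNReal.top_rpow_of_pos (by positivity)]
  set η : ℝ≥0∞ := (ENNReal.ofReal ε) ^ r.toReal with hη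
  have hη0 : η / 2 ≠ 0 := by
    have : 0 < η := ENNReal.rpow_pos (by simpa using hε) ENNReal.ofReal_ne_top
    simp [this.ne']
  obtain ⟨δ, δpos, hδ⟩ := ENNReal.exists_pos_sum_of_countable' hη0 ℤ
  obtain ⟨F, hF⟩ := ((tendsto_order.1 (ENNReal.tendsto_tsum_compl_atTop_zero hbsum)).2 _
    (pos_iff_ne_zero.2 hη0)).exists
  have hmem : ∀ j, MemLp f q (volume.restrict (openAnn n j)) := by
    intro j
    refine ⟨hf.aestronglyMeasurable, ?_⟩
    rw [← Measure.restrict_congr_set (openAnn_ae n hn j),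
      ← eLpNorm_indicator_eq_eLpNorm_restrict (measurableSet_annulus n j)]
    have h := (term_le_herz n s q r hr f j).trans_lt hfin
    by_contra hc
    rw [not_lt, top_le_iff] at hc
    rw [hc, ENNReal.mul_top (wgt_ne_zero s j)] at h
    exact lt_irrefl _ h
  have happ : ∀ j, ∃ g : Euc n → ℝ,
      eLpNorm (f - g) q (volume.restrict (openAnn n j)) ≤ (δ j) ^ (1 / r.toReal) / wgt s j ∧
      (ContDiff ℝ (⊤ : ℕ∞) g ∧ HasCompactSupport g ∧ Function.support g ⊆ openAnn n j) := by
    intro j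
    apply approx_smooth n _ (isOpen_shell n _ _) q hq'.ne f (hmem j)
    refine (ENNReal.div_pos ?_ (wgt_ne_top s j)).ne'
    simp [ENNReal.rpow_eq_zero_iff, (δpos j).ne', hr0.le]
  choose g hg1 hg2 hg3 hg4 using happ
  have hgz : ∀ i j (x : Euc n), x ∈ annulus n j → i ≠ j → g i x = 0 := by
    intro i j x hx hij
    by_contra h
    have h1 := hg4 i h
    exact hij (annulus_disj ⟨h1.1.le, h1.2⟩ hx)
  refine ⟨fun x => ∑ j ∈ F, g j x, ContDiff.sum fun j _ => hg2 j, ?_, ?_⟩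
  · refine HasCompactSupport.of_support_subset_isCompact
      (K := ⋃ j ∈ F, tsupport (g j)) (F.isCompact_biUnion fun j _ => hg3 j) ?_
    intro x hx
    obtain ⟨j, hj, hjx⟩ := Finset.exists_ne_zero_of_sum_ne_zero hx
    exact mem_biUnion (x := j) hj (subset_tsupport _ hjx)
  · unfold herzNorm
    rw [if_neg hr'.ne]
    rw [one_div, ENNReal.rpow_inv_lt_iff hr0]
    refine lt_of_le_of_lt (b := ∑' j, (δ j + (Set.indicator {j | j ∉ F} b j))) ?_ ?_
    · refine ENNReal.tsum_le_tsum fun j => ?_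
      change (wgt s j * _) ^ _ ≤ _
      by_cases hj : j ∈ F
      · refine le_trans ?_ le_self_add
        have he : (annulus n j).indicator (fun x => f x - ∑ j ∈ F, g j x) =
            (annulus n j).indicator (f - g j) := by
          apply indicator_congr
          intro x hx
          beta_reduce
          rw [Finset.sum_eq_single_of_mem j hj fun i _ hij => hgz i j x hx hij]
          rfl
        rw [he, eLpNorm_indicator_eq_eLpNorm_restrict (measurableSet_annulus n j),
          Measure.restrict_congr_set (openAnn_ae n hn j), ← ENNReal.le_rpow_inv_iff hr0, ← one_div]
        exact (mul_le_mul_right (hg1 j) _).trans ENNReal.mul_div_le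
      · refine le_trans ?_ le_add_self
        have he : (annulus n j).indicator (fun x => f x - ∑ j ∈ F, g j x) =
            (annulus n j).indicator f := by
          apply indicator_congr
          intro x hx
          beta_reduce
          rw [Finset.sum_eq_zero fun i hi => hgz i j x hx (fun h => hj (h ▸ hi)), sub_zero]
        rw [he, indicator_of_mem (show j ∈ {j | j ∉ F} from hj)]
    · rw [ENNReal.tsum_add, ← tsum_subtype]
      calc _ < η / 2 + η / 2 := ENNReal.add_lt_add hδ hF
        _ = η := ENNReal.add_halves _

lemma not_dense_q_top (n : ℕ) (hn : 1 ≤ n) (s : ℝ) (r : ℝ≥0∞) (hr : 0 < r) :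
    ∃ f : Euc n → ℝ, Measurable f ∧ herzNorm n s ⊤ r f < ⊤ ∧
      ∀ g : Euc n → ℝ, Continuous g →
        ENNReal.ofReal (1 / 4) ≤ herzNorm n s ⊤ r (fun x => f x - g x) := by
  set B : Set (Euc n) := {x | (1 / 2 : ℝ) ≤ ‖x‖ ∧ ‖x‖ < 3 / 4} with hB
  have hBm : MeasurableSet B := (measurableSet_le measurable_const measurable_norm).inter
    (measurableSet_lt measurable_norm measurable_const)
  have hBA : B ⊆ annulus n 0 := by
    rintro x ⟨h1, h2⟩
    constructor
    · norm_num; linarith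
    · norm_num; linarith
  refine ⟨B.indicator fun _ => 1, measurable_const.indicator hBm, ?_, ?_⟩
  · have hz : ∀ j : ℤ, j ≠ 0 → (annulus n j).indicator (B.indicator fun _ => (1 : ℝ)) = 0 := by
      intro j hj
      ext x
      by_cases hx : x ∈ annulus n j
      · rw [indicator_of_mem hx, indicator_of_notMem]
        · rfl
        · exact fun hxB => hj (annulus_disj hx (hBA hxB))
      · rw [indicator_of_notMem hx]; rfl
    have h0 : eLpNorm ((annulus n 0).indicator (B.indicator fun _ => (1 : ℝ))) ⊤ volume ≤ 1 := by
      refine (eLpNorm_indicator_le _).trans ((eLpNorm_indicator_const_le _ _).trans ?_)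
      simp
    unfold herzNorm
    split_ifs with h
    · refine lt_of_le_of_lt (iSup_le (a := 1) fun j => ?_) ENNReal.one_lt_top
      by_cases hj : j = 0
      · subst hj
        simpa using h0
      · rw [hz j hj]; simp
    · have hr0 : 0 < r.toReal := ENNReal.toReal_pos hr.ne' h
      rw [tsum_eq_single 0]
      · apply ENNReal.rpow_lt_top_of_nonneg (by positivity)
        apply (ENNReal.rpow_lt_top_of_nonneg hr0.le _).ne
        exact ENNReal.mul_ne_top ENNReal.ofReal_ne_top (h0.trans_lt ENNReal.one_lt_top).ne
      · intro j hj
        rw [hz j hj]; simp [hr0]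
  · intro g hg
    by_contra hc
    rw [not_le] at hc
    have h1 := (term_le_herz n s ⊤ r hr (fun x => B.indicator (fun _ => 1) x - g x) 0).trans_lt hc
    have hw : wgt s 0 = 1 := by simp [wgt]
    rw [hw, one_mul, eLpNorm_indicator_eq_eLpNorm_restrict (measurableSet_annulus n 0),
      eLpNorm_exponent_top] at h1
    have h2 := ae_lt_of_essSup_lt h1
    rw [ae_restrict_iff' (measurableSet_annulus n 0)] at h2
    have h3 : ∀ᵐ x : Euc n, x ∈ annulus n 0 → |B.indicator (fun _ => 1) x - g x| < 1 / 4 := by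
      filter_upwards [h2] with x hx hxa
      have := hx hxa
      rw [← ofReal_norm, ENNReal.ofReal_lt_ofReal_iff (by norm_num)] at this
      simpa using this
    obtain ⟨p, hp⟩ := exists_norm_eq' n hn (3 / 4) (by norm_num)
    obtain ⟨ρ, ρpos, hρ⟩ := Metric.continuous_iff.1 hg p (1 / 4) (by norm_num)
    have key : ∀ a b : ℝ, a < b → (∃ t : ℝ, 0 < t ∧ |t - 1| * (3 / 4) < ρ ∧
        a < t * (3 / 4) ∧ t * (3 / 4) < b) →
        ∃ x : Euc n, a < ‖x‖ ∧ ‖x‖ < b ∧ |g x - g p| < 1 / 4 ∧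
          (x ∈ annulus n 0 → |B.indicator (fun _ => 1) x - g x| < 1 / 4) := by
      rintro a b hab ⟨t, ht0, ht1, ht2, ht3⟩
      have hop : IsOpen (Metric.ball p ρ ∩ {x : Euc n | a < ‖x‖ ∧ ‖x‖ < b}) :=
        Metric.isOpen_ball.inter (isOpen_shell n a b)
      have hne : (Metric.ball p ρ ∩ {x : Euc n | a < ‖x‖ ∧ ‖x‖ < b}).Nonempty := by
        refine ⟨t • p, ?_, ?_⟩
        · rw [Metric.mem_ball, dist_eq_norm]
          have : t • p - p = (t - 1) • p := by rw [sub_smul, one_smul]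
          rw [this, norm_smul, hp, Real.norm_eq_abs]
          exact ht1
        · rw [mem_ofPred_eq, norm_smul, hp, Real.norm_eq_abs, abs_of_pos ht0]
          exact ⟨ht2, ht3⟩
      have hpos := hop.measure_pos volume hne
      have hex : ∃ x ∈ Metric.ball p ρ ∩ {x : Euc n | a < ‖x‖ ∧ ‖x‖ < b},
          (x ∈ annulus n 0 → |B.indicator (fun _ => 1) x - g x| < 1 / 4) := by
        by_contra hno
        push Not at hno
        apply hpos.ne'
        refine measure_mono_null ?_ (ae_iff.1 h3)
        intro x hx
        have := hno x hx
        simp only [mem_ofPred_eq, Classical.not_imp, not_lt]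
        exact this
      obtain ⟨x, ⟨hx1, hx2, hx3⟩, hx4⟩ := hex
      refine ⟨x, hx2, hx3, ?_, hx4⟩
      have := hρ x hx1
      rwa [Real.dist_eq] at this
    set m := min (ρ / 2) (1 / 8) with hm
    have hm0 : 0 < m := by rw [hm]; positivity
    have hm1 : m ≤ ρ / 2 := min_le_left _ _
    have hm2 : m ≤ 1 / 8 := min_le_right _ _
    obtain ⟨x, hx1, hx2, hx3, hx4⟩ := key (1 / 2) (3 / 4) (by norm_num)
      ⟨1 - m, by linarith, by
        rw [show 1 - m - 1 = -m by ring, abs_neg, abs_of_pos hm0]; linarith, by linarith,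
        by linarith⟩
    obtain ⟨y, hy1, hy2, hy3, hy4⟩ := key (3 / 4) 1 (by norm_num)
      ⟨1 + m, by linarith, by
        rw [show 1 + m - 1 = m by ring, abs_of_pos hm0]; linarith, by linarith, by linarith⟩
    have hxB : x ∈ B := ⟨hx1.le, hx2⟩
    have hyB : y ∉ B := fun h => by linarith [h.2]
    have hyA : y ∈ annulus n 0 := ⟨by norm_num; linarith, by norm_num; linarith⟩
    have h5 := hx4 (hBA hxB)
    have h6 := hy4 hyA
    rw [indicator_of_mem hxB] at h5
    rw [indicator_of_notMem hyB] at h6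
    rw [abs_lt] at h5 h6 hx3 hy3
    linarith [h5.1, h5.2, h6.1, h6.2, hx3.1, hx3.2, hy3.1, hy3.2]

lemma not_dense_r_top (n : ℕ) (hn : 1 ≤ n) (s : ℝ) (q : ℝ≥0∞) (hq : 0 < q) :
    ∃ f : Euc n → ℝ, Measurable f ∧ herzNorm n s q ⊤ f < ⊤ ∧
      ∀ g : Euc n → ℝ, HasCompactSupport g →
        ENNReal.ofReal 1 ≤ herzNorm n s q ⊤ (fun x => f x - g x) := by
  set m : ℤ → ℝ≥0∞ := fun j => eLpNorm ((annulus n j).indicator fun _ => (1 : ℝ)) q volume with hm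
  have hm0 : ∀ j, m j ≠ 0 := by
    intro j h
    rw [hm] at h
    simp only at h
    rw [eLpNorm_eq_zero_iff
      (measurable_const.indicator (measurableSet_annulus n j)).aestronglyMeasurable hq.ne',
      indicator_ae_eq_zero] at h
    have h2 := annulus_vol_pos n hn j
    simp [Function.support_const] at h
    exact h2.ne' h
  have hmt : ∀ j, m j ≠ ⊤ := fun j =>
    (memLp_indicator_const q (measurableSet_annulus n j) (1 : ℝ)
      (Or.inr (annulus_vol_lt_top n j).ne)).2.ne
  set c : ℤ → ℝ := fun j => ((wgt s j * m j)⁻¹).toReal with hc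
  set f : Euc n → ℝ := fun x => c (⌊Real.logb 2 ‖x‖⌋ + 1) with hf
  have hfc : ∀ j (x : Euc n), x ∈ annulus n j → f x = c j := by
    intro j x hx
    have hpos : 0 < ‖x‖ := lt_of_lt_of_le (by positivity) hx.1
    have : ⌊Real.logb 2 ‖x‖⌋ = j - 1 := by
      rw [Int.floor_eq_iff]
      constructor
      · rw [Real.le_logb_iff_rpow_le (by norm_num) hpos, Real.rpow_intCast]
        exact hx.1
      · rw [Real.logb_lt_iff_lt_rpow (by norm_num) hpos]
        have : ((j - 1 : ℤ) : ℝ) + 1 = (j : ℝ) := by push_cast; ring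
        rw [this, Real.rpow_intCast]
        exact hx.2
    rw [hf]
    simp only
    rw [this, sub_add_cancel]
  have hterm : ∀ j, wgt s j * eLpNorm ((annulus n j).indicator f) q volume = 1 := by
    intro j
    have he : (annulus n j).indicator f =
        c j • ((annulus n j).indicator fun _ => (1 : ℝ)) := by
      ext x
      by_cases hx : x ∈ annulus n j
      · simp [hx, hfc j x hx]
      · simp [hx]
    have h1 : wgt s j * m j ≠ 0 := mul_ne_zero (wgt_ne_zero s j) (hm0 j)
    have h2 : wgt s j * m j ≠ ⊤ := ENNReal.mul_ne_top (wgt_ne_top s j) (hmt j)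
    have hce : ‖c j‖ₑ = (wgt s j * m j)⁻¹ := by
      rw [hc]
      simp only
      rw [Real.enorm_eq_ofReal ENNReal.toReal_nonneg,
        ENNReal.ofReal_toReal (ENNReal.inv_ne_top.2 h1)]
    rw [he, eLpNorm_const_smul, hce]
    change wgt s j * ((wgt s j * m j)⁻¹ * m j) = 1
    rw [mul_left_comm]
    exact ENNReal.inv_mul_cancel h1 h2
  refine ⟨f, ?_, ?_, ?_⟩
  · have h1 : Measurable fun x : Euc n => ⌊Real.logb 2 ‖x‖⌋ := by
      have : Measurable fun x : Euc n => Real.logb 2 ‖x‖ := by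
        unfold Real.logb
        exact (Real.measurable_log.comp measurable_norm).div_const _
      exact Int.measurable_floor.comp this
    exact (measurable_from_top (f := fun k : ℤ => c (k + 1))).comp h1
  · unfold herzNorm
    rw [if_pos rfl]
    refine lt_of_le_of_lt (iSup_le (a := 1) fun j => (hterm j).le) ENNReal.one_lt_top
  · intro g hg
    obtain ⟨R, hR⟩ := hg.isCompact.isBounded.subset_closedBall (0 : Euc n)
    obtain ⟨N, hN⟩ := pow_unbounded_of_one_lt R (one_lt_two : (1 : ℝ) < 2)
    have he : (annulus n (N + 1)).indicator (fun x => f x - g x) =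
        (annulus n (N + 1)).indicator f := by
      apply indicator_congr
      intro x hx
      have : g x = 0 := by
        by_contra h
        have h1 := hR (subset_tsupport g h)
        have h2 := hx.1
        rw [mem_closedBall_zero_iff] at h1
        rw [add_sub_cancel_right, zpow_natCast] at h2
        linarith
      simp only [this, sub_zero]
    have := term_le_herz n s q ⊤ ENNReal.zero_lt_top (fun x => f x - g x) (N + 1)
    rw [he, hterm] at this
    simpa using this

/-- Under the condition guaranteeing `C_c^∞(ℝⁿ) ⊂ K̇^s_{q,r}(ℝⁿ)`, the space
`C_c^∞(ℝⁿ)` is dense in `K̇^s_{q,r}(ℝⁿ)` if and only if `q < ∞` and `r < ∞`. -/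
theorem herz_dense_iff
    (n : ℕ) (hn : 1 ≤ n) (s : ℝ) (q r : ℝ≥0∞) (hq : 0 < q) (hr : 0 < r)
    (hwd : 0 < s / (n : ℝ) + (q⁻¹).toReal ∨
      (s / (n : ℝ) + (q⁻¹).toReal = 0 ∧ r = ⊤)) :
    (∀ f : Euc n → ℝ, Measurable f → herzNorm n s q r f < ⊤ →
        ∀ ε : ℝ, 0 < ε → ∃ g : Euc n → ℝ, ContDiff ℝ (⊤ : ℕ∞) g ∧ HasCompactSupport g ∧
          herzNorm n s q r (fun x => f x - g x) < ENNReal.ofReal ε) ↔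
      (q < ⊤ ∧ r < ⊤) := by
  constructor
  · intro H
    constructor
    · by_contra hc
      have hq' : q = ⊤ := by simpa using hc
      subst hq'
      obtain ⟨f, hf1, hf2, hf3⟩ := not_dense_q_top n hn s r hr
      obtain ⟨g, hg1, _, hg3⟩ := H f hf1 hf2 (1 / 4) (by norm_num)
      exact absurd hg3 (not_lt.2 (hf3 g hg1.continuous))
    · by_contra hc
      have hr' : r = ⊤ := by simpa using hc
      subst hr'
      obtain ⟨f, hf1, hf2, hf3⟩ := not_dense_r_top n hn s q hq
      obtain ⟨g, _, hg2, hg3⟩ := H f hf1 hf2 1 one_pos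
      exact absurd hg3 (not_lt.2 (hf3 g hg2))
  · rintro ⟨hq', hr'⟩ f hf hfin ε hε
    exact dense_of_finite n hn s q r hr hq' hr' f hf hfin ε hε
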